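/- For every τ in the complex upper half plane, E_{2,2}(τ)⁴ − E_{2,4}(τ)² = 256·(η(τ)η(2τ))⁸. -/

import Mathlib

open Complex

/-- `q = exp(2πiτ)`. -/
noncomputable def qq (τ : ℂ) : ℂ := Complex.exp (2 * Real.pi * Complex.I * τ)

/-- `σ_k(n) = Σ_{d ∣ n} d^k`, as a complex number. -/
noncomputable def sigmaC (k n : ℕ) : ℂ := ∑ d ∈ n.divisors, (d : ℂ) ^ k

/-- Eisenstein series `E₂(τ) = 1 - 24 Σ_{n≥1} σ₁(n) qⁿ`. -/
noncomputable def E₂ (τ : ℂ) : ℂ := 1 - 24 * ∑' n : ℕ, sigmaC 1 (n + 1) * qq τ ^ (n + 1)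

/-- Eisenstein series `E₄(τ) = 1 + 240 Σ_{n≥1} σ₃(n) qⁿ`. -/
noncomputable def E₄ (τ : ℂ) : ℂ := 1 + 240 * ∑' n : ℕ, sigmaC 3 (n + 1) * qq τ ^ (n + 1)

/-- Eisenstein series `E₆(τ) = 1 - 504 Σ_{n≥1} σ₅(n) qⁿ`. -/
noncomputable def E₆ (τ : ℂ) : ℂ := 1 - 504 * ∑' n : ℕ, sigmaC 5 (n + 1) * qq τ ^ (n + 1)

/-- Dedekind eta function `η(τ) = exp(πiτ/12) ∏_{n≥1} (1 - qⁿ)`. -/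
noncomputable def η (τ : ℂ) : ℂ :=
  Complex.exp (Real.pi * Complex.I * τ / 12) * ∏' n : ℕ, (1 - qq τ ^ (n + 1))

/-- Theta function `θ(τ) = Σ_{n ∈ ℤ} q^{n²}`. -/
noncomputable def θ (τ : ℂ) : ℂ := ∑' n : ℤ, qq τ ^ (n ^ 2)

/-- The character `χ₋₄`: `χ₋₄(d) = 1, -1, 0` according as `d ≡ 1, 3, 0/2 (mod 4)`. -/
noncomputable def χ₄ (d : ℕ) : ℂ := if d % 4 = 1 then 1 else if d % 4 = 3 then -1 else 0

/-- The character `χ₋₃`: `χ₋₃(d) = 1, -1, 0` according as `d ≡ 1, 2, 0 (mod 3)`. -/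
noncomputable def χ₃ (d : ℕ) : ℂ := if d % 3 = 1 then 1 else if d % 3 = 2 then -1 else 0

/-- `E_{1,-4}(τ) = 1/4 + Σ_{n≥1} (Σ_{d∣n} χ₋₄(d)) qⁿ`. -/
noncomputable def E₁₄ (τ : ℂ) : ℂ :=
  1 / 4 + ∑' n : ℕ, (∑ d ∈ (n + 1).divisors, χ₄ d) * qq τ ^ (n + 1)

/-- `E_{1,-3}(τ) = 1/6 + Σ_{n≥1} (Σ_{d∣n} χ₋₃(d)) qⁿ`. -/
noncomputable def E₁₃ (τ : ℂ) : ℂ :=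
  1 / 6 + ∑' n : ℕ, (∑ d ∈ (n + 1).divisors, χ₃ d) * qq τ ^ (n + 1)

/-- `E_{2,2}(τ) = 2E₂(2τ) - E₂(τ)`. -/
noncomputable def E₂₂ (τ : ℂ) : ℂ := 2 * E₂ (2 * τ) - E₂ τ

/-- `E_{2,4}(τ) = (4E₄(2τ) - E₄(τ))/3`. -/
noncomputable def E₂₄ (τ : ℂ) : ℂ := (4 * E₄ (2 * τ) - E₄ τ) / 3

/-- `E_{3,2}(τ) = (3E₂(3τ) - E₂(τ))/2`. -/
noncomputable def E₃₂ (τ : ℂ) : ℂ := (3 * E₂ (3 * τ) - E₂ τ) / 2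

/-- `E_{3,4}(τ) = (9E₄(3τ) - E₄(τ))/8`. -/
noncomputable def E₃₄ (τ : ℂ) : ℂ := (9 * E₄ (3 * τ) - E₄ τ) / 8

/-- `E_{4,2}(τ) = (4E₂(4τ) - E₂(τ))/3`. -/
noncomputable def E₄₂ (τ : ℂ) : ℂ := (4 * E₂ (4 * τ) - E₂ τ) / 3

/-- `E'_{4,2}(τ) = 4E₂(4τ) - 4E₂(2τ) + E₂(τ)`. -/
noncomputable def E₄₂' (τ : ℂ) : ℂ := 4 * E₂ (4 * τ) - 4 * E₂ (2 * τ) + E₂ τ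

/-- `f_{1,j}(τ) = 2E₂(τ) - ((3+(-1)ʲi√3)/6)E₂(τ/2) - ((3-(-1)ʲi√3)/6)E₂((τ+1)/2)`. -/
noncomputable def f₁ (j : ℕ) (τ : ℂ) : ℂ :=
  2 * E₂ τ - ((3 + (-1 : ℂ) ^ j * Complex.I * Real.sqrt 3) / 6) * E₂ (τ / 2)
    - ((3 - (-1 : ℂ) ^ j * Complex.I * Real.sqrt 3) / 6) * E₂ ((τ + 1) / 2)

/-- `g_{1,j}(τ) = (3/2)E₂(τ) - (1/4) Σ_{0≤m≤2, m≢j (mod 3)} E₂((τ+m)/3)`. -/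
noncomputable def g₁ (j : ℕ) (τ : ℂ) : ℂ :=
  (3 / 2) * E₂ τ -
    (1 / 4) * ∑ m ∈ (Finset.range 3).filter (fun m => ¬ m % 3 = j % 3), E₂ ((τ + m) / 3)

/-- `f_{2,j}(τ) = 4E_{1,-4}(τ) + (-1)ʲ·2i·(E_{1,-4}(τ/2) - E_{1,-4}((τ+1)/2))`. -/
noncomputable def f₂ (j : ℕ) (τ : ℂ) : ℂ :=
  4 * E₁₄ τ + (-1 : ℂ) ^ j * 2 * Complex.I * (E₁₄ (τ / 2) - E₁₄ ((τ + 1) / 2))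

/-- `f_{3,j}(τ) = 6E_{1,-3}(2τ) + (-1)ʲ·i√3·(E_{1,-3}(τ/2) - E_{1,-3}((τ+1)/2))`. -/
noncomputable def f₃ (j : ℕ) (τ : ℂ) : ℂ :=
  6 * E₁₃ (2 * τ) +
    (-1 : ℂ) ^ j * Complex.I * Real.sqrt 3 * (E₁₃ (τ / 2) - E₁₃ ((τ + 1) / 2))

/-- `f_{4,j}(τ) = θ(τ/2 - (-1)ʲ/4)`. -/
noncomputable def f₄ (j : ℕ) (τ : ℂ) : ℂ := θ (τ / 2 - (-1 : ℂ) ^ j / 4)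

/-- `g_{4,j}(τ) = 2θ(2τ)² - θ((τ+j)/2)²`. -/
noncomputable def g₄ (j : ℕ) (τ : ℂ) : ℂ := 2 * θ (2 * τ) ^ 2 - θ ((τ + j) / 2) ^ 2

/-- `E_{3,-3,1}(τ) = -1/9 + Σ_{n≥1} (Σ_{d∣n} d²χ₋₃(d)) qⁿ`. -/
noncomputable def E₃₃₁ (τ : ℂ) : ℂ :=
  -(1 / 9) + ∑' n : ℕ, (∑ d ∈ (n + 1).divisors, (d : ℂ) ^ 2 * χ₃ d) * qq τ ^ (n + 1)

/-- `E_{3,1,-3}(τ) = Σ_{n≥1} (Σ_{d∣n} d²χ₋₃(n/d)) qⁿ`. -/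
noncomputable def E₃₁₃ (τ : ℂ) : ℂ :=
  ∑' n : ℕ, (∑ d ∈ (n + 1).divisors, (d : ℂ) ^ 2 * χ₃ ((n + 1) / d)) * qq τ ^ (n + 1)

open UpperHalfPlane hiding I
open Filter Topology
open scoped MatrixGroups

lemma qq_two_mul (τ : ℂ) : qq (2 * τ) = qq τ ^ 2 := by
  rw [qq, qq, ← Complex.exp_nat_mul]
  push_cast
  ring_nf

lemma qq_add_one (τ : ℂ) : qq (τ + 1) = qq τ := by
  rw [qq, qq, mul_add, mul_one, Complex.exp_add, Complex.exp_two_pi_mul_I, mul_one]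

lemma sigmaC_eq_sigma (k n : ℕ) : sigmaC k n = (ArithmeticFunction.sigma k n : ℂ) := by
  simp [sigmaC, ArithmeticFunction.sigma_apply]

lemma E₂_eq_eisenstein (z : ℍ) : E₂ z = EisensteinSeries.E2 z := by
  rw [EisensteinSeries.E2_eq_tsum_cexp,
    tsum_pnat_eq_tsum_succ (f := fun n : ℕ ↦
      (ArithmeticFunction.sigma 1 n : ℂ) * cexp (2 * Real.pi * I * z) ^ n)]
  simp [E₂, qq, sigmaC_eq_sigma]

lemma E₄_eq_eisenstein (z : ℍ) : E₄ z = ModularForm.E₄ z := by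
  have h := EisensteinSeries.q_expansion_bernoulli (k := 4) (by norm_num) (by decide) z
  simp only [zpow_natCast] at h
  rw [tsum_pnat_eq_tsum_succ (f := fun n : ℕ ↦
      (ArithmeticFunction.sigma (4 - 1) n : ℂ) * cexp (2 * Real.pi * I * z) ^ n),
    show bernoulli 4 = -1 / 30 by decide +kernel] at h
  rw [h]
  norm_num [E₄, qq, sigmaC_eq_sigma]

lemma η_eq_eta (τ : ℂ) : η τ = ModularForm.eta τ := by
  simp only [η, ModularForm.eta, ModularForm.eta_q_eq_pow, qq, Function.Periodic.qParam]
  congr 2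
  push_cast
  ring

lemma neg_one_div_im_pos {τ : ℂ} (hτ : 0 < τ.im) : 0 < (-1 / τ).im := by
  simpa [neg_div, inv_neg] using UpperHalfPlane.im_inv_neg_coe_pos ⟨τ, hτ⟩

lemma coe_modular_S_smul (z : ℍ) : ((ModularGroup.S • z : ℍ) : ℂ) = -1 / z := by
  rw [modular_S_smul, UpperHalfPlane.coe_mk, inv_neg, neg_div, one_div]

lemma E₂_neg_inv {τ : ℂ} (hτ : 0 < τ.im) :
    E₂ (-1 / τ) = τ ^ 2 * E₂ τ - 6 * I / Real.pi * τ := by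
  lift τ to ℍ using hτ
  have h := EisensteinSeries.G2_S_transform τ
  have hz := τ.ne_zero
  have hpi : (Real.pi : ℂ) ≠ 0 := by exact_mod_cast Real.pi_ne_zero
  rw [← coe_modular_S_smul, E₂_eq_eisenstein, E₂_eq_eisenstein]
  simp only [EisensteinSeries.E2, Pi.smul_apply, smul_eq_mul, h, riemannZeta_two]
  field_simp
  ring

lemma E₄_neg_inv {τ : ℂ} (hτ : 0 < τ.im) : E₄ (-1 / τ) = τ ^ 4 * E₄ τ := by
  lift τ to ℍ using hτ
  have : SlashInvariantFormClass (ModularForm 𝒮ℒ 4) (CongruenceSubgroup.Gamma 1) 4 :=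
    CongruenceSubgroup.Gamma_one_coe_eq_SL ▸ inferInstance
  rw [← coe_modular_S_smul, E₄_eq_eisenstein, E₄_eq_eisenstein,
    SlashInvariantForm.slash_action_eqn_SL'' _ (CongruenceSubgroup.mem_Gamma_one ModularGroup.S),
    ModularGroup.denom_S]
  rfl

lemma sqrt_pow_eight {z : ℂ} (hz : z ≠ 0) : Complex.sqrt z ^ 8 = z ^ 4 := by
  rw [sqrt_eq_exp hz, ← Complex.exp_nat_mul, show ((8 : ℕ) : ℂ) * (log z / 2) = (4 : ℕ) * log z by
    push_cast; ring, Complex.exp_nat_mul, exp_log hz]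

lemma η_neg_inv_pow_eight {τ : ℂ} (hτ : 0 < τ.im) : η (-1 / τ) ^ 8 = τ ^ 4 * η τ ^ 8 := by
  have hτ0 : τ ≠ 0 := by rintro rfl; simp at hτ
  have h : ModularForm.eta (-1 / τ) = (Complex.sqrt I)⁻¹ * (Complex.sqrt τ * ModularForm.eta τ) :=
    ModularForm.eta_comp_eq_csqrt_I_inv hτ
  rw [η_eq_eta, η_eq_eta, h, mul_pow, mul_pow, inv_pow, sqrt_pow_eight I_ne_zero,
    sqrt_pow_eight hτ0, I_pow_four, inv_one, one_mul]

lemma η_ne_zero {τ : ℂ} (hτ : 0 < τ.im) : η τ ≠ 0 := by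
  rw [η_eq_eta]
  exact ModularForm.eta_ne_zero hτ

/-- The weight-`0` quotient `(E_{2,2}⁴ - E_{2,4}²) / (η(τ)η(2τ))⁸`. -/
noncomputable def frickeQuotient (τ : ℂ) : ℂ :=
  (E₂₂ τ ^ 4 - E₂₄ τ ^ 2) / (η τ * η (2 * τ)) ^ 8

lemma frickeQuotient_neg_inv {τ : ℂ} (hτ : 0 < τ.im) :
    frickeQuotient (-1 / (2 * τ)) = frickeQuotient τ := by
  have hτ0 : τ ≠ 0 := by rintro rfl; simp at hτ
  have h2τ : 0 < (2 * τ).im := by simpa using hτ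
  have hη : η τ * η (2 * τ) ≠ 0 := mul_ne_zero (η_ne_zero hτ) (η_ne_zero h2τ)
  have hdouble : 2 * (-1 / (2 * τ)) = -1 / τ := by field_simp
  have hE₂₂ : E₂₂ (-1 / (2 * τ)) = -2 * τ ^ 2 * E₂₂ τ := by
    rw [E₂₂, E₂₂, hdouble, E₂_neg_inv hτ, E₂_neg_inv h2τ]
    ring
  have hE₂₄ : E₂₄ (-1 / (2 * τ)) = -4 * τ ^ 4 * E₂₄ τ := by
    rw [E₂₄, E₂₄, hdouble, E₄_neg_inv hτ, E₄_neg_inv h2τ]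
    ring
  rw [frickeQuotient, frickeQuotient, hE₂₂, hE₂₄, hdouble, mul_pow (η _), η_neg_inv_pow_eight hτ,
    η_neg_inv_pow_eight h2τ, div_eq_div_iff]
  · ring
  · have hη' := pow_ne_zero 8 hη
    rw [mul_pow] at hη'
    rw [show (2 * τ) ^ 4 * η (2 * τ) ^ 8 * (τ ^ 4 * η τ ^ 8) =
      16 * τ ^ 8 * (η τ ^ 8 * η (2 * τ) ^ 8) by ring]
    exact mul_ne_zero (mul_ne_zero (by norm_num) (pow_ne_zero 8 hτ0)) hη'
  · exact pow_ne_zero 8 hη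

lemma η_mul_η_two_mul_pow_eight (τ : ℂ) : (η τ * η (2 * τ)) ^ 8 =
    qq τ * ((∏' n : ℕ, (1 - qq τ ^ (n + 1))) * ∏' n : ℕ, (1 - (qq τ ^ 2) ^ (n + 1))) ^ 8 := by
  have h : qq τ = (cexp (Real.pi * I * τ / 12) * cexp (Real.pi * I * (2 * τ) / 12)) ^ 8 := by
    rw [qq, ← Complex.exp_add, ← Complex.exp_nat_mul]
    push_cast
    ring_nf
  rw [η, η, qq_two_mul]
  nth_rw 3 [h]
  ring

lemma frickeQuotient_add_one (τ : ℂ) : frickeQuotient (τ + 1) = frickeQuotient τ := by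
  simp only [frickeQuotient, η_mul_η_two_mul_pow_eight, E₂₂, E₂₄, E₂, E₄, qq_two_mul, qq_add_one]

lemma differentiableOn_E₂ : DifferentiableOn ℂ E₂ {z | 0 < z.im} :=
  (UpperHalfPlane.mdifferentiable_iff.mp E2_mdifferentiable).congr fun z hz ↦ by
    simpa [ofComplex_apply_of_im_pos hz] using E₂_eq_eisenstein ⟨z, hz⟩

lemma differentiableOn_E₄ : DifferentiableOn ℂ E₄ {z | 0 < z.im} :=
  (UpperHalfPlane.mdifferentiable_iff.mp ModularForm.E₄.holo').congr fun z hz ↦ by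
    simpa [ofComplex_apply_of_im_pos hz] using E₄_eq_eisenstein ⟨z, hz⟩

lemma differentiableOn_η : DifferentiableOn ℂ η {z | 0 < z.im} := fun z hz ↦ by
  rw [funext η_eq_eta]
  exact (ModularForm.differentiableAt_eta_of_mem_upperHalfPlaneSet hz).differentiableWithinAt

lemma differentiableOn_frickeQuotient : DifferentiableOn ℂ frickeQuotient {z | 0 < z.im} := by
  have hmap : Set.MapsTo (fun z : ℂ ↦ 2 * z) {z | 0 < z.im} {z | 0 < z.im} := fun z hz ↦ by
    simpa using hz
  have hd : DifferentiableOn ℂ (fun z : ℂ ↦ 2 * z) {z | 0 < z.im} := by fun_prop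
  have h₂ := differentiableOn_E₂.comp hd hmap
  have h₄ := differentiableOn_E₄.comp hd hmap
  have hη := differentiableOn_η.comp hd hmap
  refine ((((h₂.const_mul 2).sub differentiableOn_E₂).pow 4).sub
    ((((h₄.const_mul 4).sub differentiableOn_E₄).div_const 3).pow 2)).div
    ((differentiableOn_η.mul hη).pow 8) fun z hz ↦ ?_
  exact pow_ne_zero 8 (mul_ne_zero (η_ne_zero hz) (η_ne_zero (hmap hz)))

lemma tendsto_tsum_sigmaC_mul_pow (k : ℕ) :
    Tendsto (fun q : ℂ ↦ ∑' n : ℕ, sigmaC k (n + 1) * q ^ n) (𝓝 0) (𝓝 1) := by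
  have hsum : Summable fun n : ℕ ↦ ((n + 1 : ℕ) : ℝ) ^ (k + 1) * (1 / 2) ^ n := by
    refine (((summable_nat_add_iff 1).mpr (summable_pow_mul_geometric_of_norm_lt_one (k + 1)
      (r := (1 / 2 : ℝ)) (by norm_num))).mul_left 2).congr fun n ↦ ?_
    rw [pow_succ (1 / 2 : ℝ)]
    ring
  have h := tendsto_tsum_of_dominated_convergence (𝓕 := 𝓝 (0 : ℂ))
    (f := fun q n ↦ sigmaC k (n + 1) * q ^ n) (g := fun n ↦ sigmaC k (n + 1) * 0 ^ n) hsum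
    (fun n ↦ ((continuous_pow n).const_mul _).tendsto 0) ?_
  · convert h using 2
    rw [tsum_eq_single 0 fun n hn ↦ by simp [hn]]
    simp [sigmaC]
  · filter_upwards [Metric.ball_mem_nhds (0 : ℂ) (by norm_num : (0 : ℝ) < 1 / 2)] with q hq n
    rw [sigmaC_eq_sigma, norm_mul, norm_pow, Complex.norm_natCast]
    rw [mem_ball_zero_iff] at hq
    gcongr
    exact_mod_cast ArithmeticFunction.sigma_le_pow_succ k (n + 1)

lemma tendsto_tprod_one_sub_pow :
    Tendsto (fun q : ℂ ↦ ∏' n : ℕ, (1 - q ^ (n + 1))) (𝓝 0) (𝓝 1) := by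
  have h := (ModularForm.differentiableOn_tprod_one_sub_pow.differentiableAt
    (Metric.ball_mem_nhds 0 one_pos)).continuousAt.tendsto
  simpa using h

/-- The function of `q` that represents `frickeQuotient`, given `aₖ = Σ σₖ(n + 1) qⁿ`,
`bₖ = Σ σₖ(n + 1) q²ⁿ` and the product `p` of the two eta products. -/
lemma frickeQuotient_eq (τ : ℂ) {q a₁ b₁ a₃ b₃ p : ℂ} (hq : q = qq τ)
    (ha₁ : a₁ = ∑' n : ℕ, sigmaC 1 (n + 1) * q ^ n)
    (hb₁ : b₁ = ∑' n : ℕ, sigmaC 1 (n + 1) * (q ^ 2) ^ n)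
    (ha₃ : a₃ = ∑' n : ℕ, sigmaC 3 (n + 1) * q ^ n)
    (hb₃ : b₃ = ∑' n : ℕ, sigmaC 3 (n + 1) * (q ^ 2) ^ n)
    (hp : p = (∏' n : ℕ, (1 - q ^ (n + 1))) * ∏' n : ℕ, (1 - (q ^ 2) ^ (n + 1))) :
    frickeQuotient τ = (24 * (a₁ - 2 * q * b₁) * (2 + 24 * q * (a₁ - 2 * q * b₁)) *
      (1 + (1 + 24 * q * (a₁ - 2 * q * b₁)) ^ 2) +
      80 * (a₃ - 4 * q * b₃) * (2 - 80 * q * (a₃ - 4 * q * b₃))) / p ^ 8 := by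
  have hshift (k : ℕ) (r : ℂ) : ∑' n : ℕ, sigmaC k (n + 1) * r ^ (n + 1) =
      r * ∑' n : ℕ, sigmaC k (n + 1) * r ^ n := by
    rw [← tsum_mul_left]
    exact tsum_congr fun n ↦ by ring
  have hq0 : q ≠ 0 := hq ▸ Complex.exp_ne_zero _
  rw [frickeQuotient, η_mul_η_two_mul_pow_eight, E₂₂, E₂₄, E₂, E₂, E₄, E₄, qq_two_mul, ← hq,
    hshift, hshift, hshift, hshift, ← ha₁, ← hb₁, ← ha₃, ← hb₃, ← hp,
    ← mul_div_mul_left _ (p ^ 8) hq0]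
  congr 1
  ring

lemma tendsto_frickeQuotient :
    Tendsto frickeQuotient (comap Complex.im atTop) (𝓝 256) := by
  have hq : Tendsto qq (comap Complex.im atTop) (𝓝 0) := by
    have h := (Function.Periodic.qParam_tendsto one_pos).mono_right nhdsWithin_le_nhds
    refine h.congr fun τ ↦ ?_
    simp [qq, Function.Periodic.qParam]
  have hq2 : Tendsto (fun τ ↦ qq τ ^ 2) (comap Complex.im atTop) (𝓝 0) := by
    simpa using hq.pow 2
  have ha (k : ℕ) := (tendsto_tsum_sigmaC_mul_pow k).comp hq
  have hb (k : ℕ) := (tendsto_tsum_sigmaC_mul_pow k).comp hq2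
  have hp := (tendsto_tprod_one_sub_pow.comp hq).mul (tendsto_tprod_one_sub_pow.comp hq2)
  have h₂ := (ha 1).sub ((hq.const_mul 2).mul (hb 1))
  have h₄ := (ha 3).sub ((hq.const_mul 4).mul (hb 3))
  have h₂' := (hq.const_mul 24).mul h₂
  have h₄' := (hq.const_mul 80).mul h₄
  have h := ((((h₂.const_mul 24).mul (h₂'.const_add 2)).mul
    (((h₂'.const_add 1).pow 2).const_add 1)).add
    ((h₄.const_mul 80).mul (h₄'.const_sub 2))).div (hp.pow 8) (by norm_num)
  norm_num at h
  exact h.congr fun τ ↦ (frickeQuotient_eq τ rfl rfl rfl rfl rfl rfl).symm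

/-- The product over the cosets of `Γ₀(2)` in `SL(2, ℤ)` of the translates of
`frickeQuotient - c`. -/
noncomputable def frickeNorm (c : ℂ) (z : ℍ) : ℂ :=
  (frickeQuotient z - c) * (frickeQuotient (z / 2) - c) * (frickeQuotient ((z + 1) / 2) - c)

lemma frickeNorm_S_smul (c : ℂ) (z : ℍ) : frickeNorm c (ModularGroup.S • z) = frickeNorm c z := by
  have hz0 := z.ne_zero
  have hz := z.im_pos
  have h₁ : frickeQuotient (-1 / z) = frickeQuotient (z / 2) := by
    rw [← frickeQuotient_neg_inv (τ := z / 2) (by simpa using hz)]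
    congr 1
    field_simp
  have h₂ : frickeQuotient (-1 / z / 2) = frickeQuotient z := by
    rw [← frickeQuotient_neg_inv hz]
    congr 1
    field_simp
  have h₃ : frickeQuotient ((-1 / z + 1) / 2) = frickeQuotient ((z + 1) / 2) := by
    set w : ℂ := (z - 1) / 2 with hw
    have hwim : 0 < w.im := by simpa [hw] using hz
    have hw0 : w ≠ 0 := by rintro h; simp [h] at hwim
    have hw1 : 0 < (-1 / (2 * w)).im := neg_one_div_im_pos (by simpa using hwim)
    have hz1 : (z : ℂ) - 1 ≠ 0 := by
      intro h; simp [hw, h] at hw0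
    have hv : 0 < (-1 / (2 * w) - 1).im := by simpa using hw1
    have e₁ : (-1 / (z : ℂ) + 1) / 2 = -1 / (2 * (-1 / (2 * w) - 1)) := by
      have : -1 / (2 * w) - 1 = -z / (z - 1) := by
        rw [hw]; field_simp; ring
      rw [this]; field_simp; ring
    have e₂ : ((z : ℂ) + 1) / 2 = w + 1 := by rw [hw]; ring
    rw [e₁, e₂, frickeQuotient_neg_inv hv, frickeQuotient_add_one, ← frickeQuotient_neg_inv hwim,
      ← frickeQuotient_add_one, sub_add_cancel]
  rw [frickeNorm, frickeNorm, coe_modular_S_smul, h₁, h₂, h₃]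
  ring

lemma frickeNorm_T_smul (c : ℂ) (z : ℍ) : frickeNorm c (ModularGroup.T • z) = frickeNorm c z := by
  have h : ((ModularGroup.T • z : ℍ) : ℂ) = z + 1 := by
    rw [modular_T_smul, coe_vadd, add_comm, ofReal_one]
  rw [frickeNorm, frickeNorm, h, frickeQuotient_add_one,
    show ((z : ℂ) + 1 + 1) / 2 = z / 2 + 1 by ring, frickeQuotient_add_one]
  ring

lemma tendsto_frickeNorm (c : ℂ) :
    Tendsto (frickeNorm c) atImInfty (𝓝 ((256 - c) ^ 3)) := by
  have hz : Tendsto (fun z : ℍ ↦ z.im) atImInfty atTop := tendsto_comap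
  have h₁ : Tendsto (fun z : ℍ ↦ (z : ℂ)) atImInfty (comap Complex.im atTop) :=
    tendsto_comap_iff.mpr hz
  have h₂ : Tendsto (fun z : ℍ ↦ (z / 2 : ℂ)) atImInfty (comap Complex.im atTop) :=
    tendsto_comap_iff.mpr ((hz.atTop_div_const two_pos).congr fun z ↦ by simp)
  have h₃ : Tendsto (fun z : ℍ ↦ ((z + 1) / 2 : ℂ)) atImInfty (comap Complex.im atTop) :=
    tendsto_comap_iff.mpr ((hz.atTop_div_const two_pos).congr fun z ↦ by simp)
  convert! (((tendsto_frickeQuotient.comp h₁).sub_const c).mul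
    ((tendsto_frickeQuotient.comp h₂).sub_const c)).mul
    ((tendsto_frickeQuotient.comp h₃).sub_const c) using 2
  ring

lemma frickeNorm_slash (c : ℂ) (γ : SL(2, ℤ)) :
    SlashAction.map (0 : ℤ) γ (frickeNorm c) = frickeNorm c := by
  refine SlashInvariantForm.slash_action_generators_SL2Z ?_ ?_ γ <;> ext z
  · simpa [ModularForm.SL_slash_apply] using frickeNorm_S_smul c z
  · simpa [ModularForm.SL_slash_apply] using frickeNorm_T_smul c z

/-- `frickeNorm c` as a modular form of weight `0` and level one. -/
noncomputable def frickeNormForm (c : ℂ) : ModularForm 𝒮ℒ 0 where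
  toFun := frickeNorm c
  slash_action_eq' A hA := by
    obtain ⟨γ, rfl⟩ := hA
    exact frickeNorm_slash c γ
  holo' := by
    rw [UpperHalfPlane.mdifferentiable_iff]
    have h₁ := differentiableOn_frickeQuotient
    have h₂ := h₁.comp (f := fun z : ℂ ↦ z / 2) (s := {z | 0 < z.im}) (by fun_prop)
      fun z hz ↦ by simpa using hz
    have h₃ := h₁.comp (f := fun z : ℂ ↦ (z + 1) / 2) (s := {z | 0 < z.im}) (by fun_prop)
      fun z hz ↦ by simpa using hz
    refine (((h₁.sub_const c).mul (h₂.sub_const c)).mul (h₃.sub_const c)).congr fun z hz ↦ ?_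
    simp [frickeNorm, ofComplex_apply_of_im_pos hz]
  bdd_at_cusps' hc := by
    rw [Subgroup.IsArithmetic.isCusp_iff_isCusp_SL2Z] at hc
    rw [OnePoint.isBoundedAt_iff_forall_SL2Z hc]
    intro γ _
    rw [frickeNorm_slash]
    exact (tendsto_frickeNorm c).isBigO_one ℝ

lemma frickeQuotient_eq_const {τ : ℂ} (hτ : 0 < τ.im) : frickeQuotient τ = 256 := by
  set c := frickeQuotient τ with hc
  obtain ⟨d, hd⟩ := ModularFormClass.levelOne_weight_zero_const (frickeNormForm c)
  have hval (z : ℍ) : frickeNorm c z = d := congrFun hd z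
  have hd0 : d = 0 := by rw [← hval ⟨τ, hτ⟩]; simp [frickeNorm, hc]
  have h := (tendsto_nhds_unique (tendsto_frickeNorm c)
    (tendsto_const_nhds.congr fun z ↦ (hval z).symm)).trans hd0
  exact (sub_eq_zero.mp (pow_eq_zero_iff three_ne_zero |>.mp h)).symm

theorem stmt7 (τ : ℂ) (hτ : 0 < τ.im) :
    E₂₂ τ ^ 4 - E₂₄ τ ^ 2 = 256 * (η τ * η (2 * τ)) ^ 8 := by
  have hη : (η τ * η (2 * τ)) ^ 8 ≠ 0 :=
    pow_ne_zero 8 (mul_ne_zero (η_ne_zero hτ) (η_ne_zero (by simpa using hτ)))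
  exact (div_eq_iff hη).mp (frickeQuotient_eq_const hτ)
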